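/- (Escape point of the Pfaff-transformed argument α_ℓ.) Let p*_ℓ := (√(3+2√3) − 1)/2. Then α_ℓ(p*_ℓ) = −1, where α_ℓ(p) := −p³(2+p)/((1−p²)(1+p)²); moreover, for every real p with −1/2 < p < p*_ℓ one has −1 < α_ℓ(p) < 1, and for every real p with p*_ℓ < p < 1 one has α_ℓ(p) < −1. -/

import Mathlib

noncomputable def αℓ (p : ℝ) : ℝ := -(p ^ 3 * (2 + p)) / ((1 - p ^ 2) * (1 + p) ^ 2)

noncomputable def pStarℓ : ℝ := (Real.sqrt (3 + 2 * Real.sqrt 3) - 1) / 2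

/-!
The denominator of `αℓ` is `1 + 2 * p - p ^ 3 * (2 + p)`, so `1 - αℓ p` has numerator `1 + 2 * p`
and `1 + αℓ p` has numerator `1 + 2 * p - 2 * p ^ 3 * (2 + p)`. In terms of `u = (2 * p + 1) ^ 2`
the latter is `-(u ^ 2 - 6 * u - 3) / 8`, whose roots are `u = 3 ± 2 * √3`. The positive root is
`(2 * pStarℓ + 1) ^ 2`; hence `1 + αℓ p` is `pStarℓ - p` times a factor that is positive for
`|p| < 1`.
-/

section

variable {p : ℝ}

lemma two_mul_pStarℓ_add_one_sq : (2 * pStarℓ + 1) ^ 2 = 3 + 2 * √3 := by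
  have h : 2 * pStarℓ + 1 = √(3 + 2 * √3) := by rw [pStarℓ]; ring
  rw [h, Real.sq_sqrt (by positivity)]

lemma pStarℓ_pos : 0 < pStarℓ := by
  have h : 1 < √(3 + 2 * √3) := Real.lt_sqrt_of_sq_lt (by linarith [Real.sqrt_nonneg 3])
  rw [pStarℓ]
  linarith

lemma pStarℓ_lt_one : pStarℓ < 1 := by
  have h₃ : √3 < 3 := by rw [Real.sqrt_lt'] <;> norm_num
  have h : √(3 + 2 * √3) < 3 := by
    rw [Real.sqrt_lt' (by norm_num)]
    linarith
  rw [pStarℓ]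
  linarith

lemma abs_pStarℓ_lt_one : |pStarℓ| < 1 := by
  rw [abs_of_pos pStarℓ_pos]
  exact pStarℓ_lt_one

lemma αℓ_denom_pos (hp : |p| < 1) : 0 < (1 - p ^ 2) * (1 + p) ^ 2 := by
  have h₁ : 0 < 1 - p ^ 2 := sub_pos.2 ((sq_lt_one_iff_abs_lt_one p).2 hp)
  have h₂ : 0 < 1 + p := by linarith [neg_lt_of_abs_lt hp]
  positivity

lemma αℓ_denom_ne_zero (hp : p ^ 2 ≠ 1) : (1 - p ^ 2) * (1 + p) ^ 2 ≠ 0 := by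
  have h : 1 + p ≠ 0 := fun h ↦ hp (by linear_combination (p - 1) * h)
  exact mul_ne_zero (sub_ne_zero.2 hp.symm) (pow_ne_zero 2 h)

lemma one_sub_αℓ (hp : p ^ 2 ≠ 1) : 1 - αℓ p = (1 + 2 * p) / ((1 - p ^ 2) * (1 + p) ^ 2) := by
  rw [αℓ, one_sub_div (αℓ_denom_ne_zero hp)]
  ring

lemma one_add_αℓ (hp : p ^ 2 ≠ 1) :
    1 + αℓ p = (1 + 2 * p - 2 * p ^ 3 * (2 + p)) / ((1 - p ^ 2) * (1 + p) ^ 2) := by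
  rw [αℓ, one_add_div (αℓ_denom_ne_zero hp)]
  ring

lemma one_add_αℓ_num_eq_mul (p : ℝ) :
    1 + 2 * p - 2 * p ^ 3 * (2 + p) =
      (pStarℓ - p) * ((pStarℓ + p + 1) * ((2 * p + 1) ^ 2 + (2 * √3 - 3)) / 2) := by
  have h₃ : √3 ^ 2 = 3 := Real.sq_sqrt (by norm_num)
  calc 1 + 2 * p - 2 * p ^ 3 * (2 + p)
      = (3 + 2 * √3 - (2 * p + 1) ^ 2) * ((2 * p + 1) ^ 2 + (2 * √3 - 3)) / 8 := by
        linear_combination -h₃ / 2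
    _ = ((2 * pStarℓ + 1) ^ 2 - (2 * p + 1) ^ 2) *
          ((2 * p + 1) ^ 2 + (2 * √3 - 3)) / 8 := by
        rw [two_mul_pStarℓ_add_one_sq]
    _ = _ := by ring

lemma one_add_αℓ_cofactor_pos (hp : -1 < p) :
    0 < (pStarℓ + p + 1) * ((2 * p + 1) ^ 2 + (2 * √3 - 3)) / 2 := by
  have h₁ : 0 < pStarℓ + p + 1 := by linarith [pStarℓ_pos]
  have h₂ : 0 < 2 * √3 - 3 := by
    have : 3 / 2 < √3 := Real.lt_sqrt_of_sq_lt (by norm_num)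
    linarith
  positivity

lemma sign_one_add_αℓ (hp : |p| < 1) :
    SignType.sign (1 + αℓ p) = SignType.sign (pStarℓ - p) := by
  rw [one_add_αℓ ((sq_lt_one_iff_abs_lt_one p).2 hp).ne, one_add_αℓ_num_eq_mul, mul_div_assoc,
    sign_mul,
    sign_pos (div_pos (one_add_αℓ_cofactor_pos (neg_lt_of_abs_lt hp)) (αℓ_denom_pos hp)), mul_one]

lemma αℓ_eq_neg_one_iff (hp : |p| < 1) : αℓ p = -1 ↔ p = pStarℓ := by
  rw [eq_neg_iff_add_eq_zero, add_comm, ← sign_eq_zero_iff, sign_one_add_αℓ hp, sign_eq_zero_iff,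
    sub_eq_zero, eq_comm]

lemma neg_one_lt_αℓ_iff (hp : |p| < 1) : -1 < αℓ p ↔ p < pStarℓ := by
  rw [neg_lt_iff_pos_add', ← sign_eq_one_iff, sign_one_add_αℓ hp, sign_eq_one_iff, sub_pos]

lemma αℓ_lt_neg_one_iff (hp : |p| < 1) : αℓ p < -1 ↔ pStarℓ < p := by
  rw [lt_neg_iff_add_neg', ← sign_eq_neg_one_iff, sign_one_add_αℓ hp, sign_eq_neg_one_iff,
    sub_neg]

lemma αℓ_lt_one_iff (hp : |p| < 1) : αℓ p < 1 ↔ -(1 / 2) < p := by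
  rw [← sub_pos, one_sub_αℓ ((sq_lt_one_iff_abs_lt_one p).2 hp).ne,
    div_pos_iff_of_pos_right (αℓ_denom_pos hp)]
  constructor <;> intro h <;> linarith

end

/-- Escape point of the Pfaff-transformed argument αℓ. -/
theorem alpha_ell_escape_point :
    αℓ pStarℓ = -1 ∧
    (∀ p : ℝ, -(1/2) < p → p < pStarℓ → -1 < αℓ p ∧ αℓ p < 1) ∧
    (∀ p : ℝ, pStarℓ < p → p < 1 → αℓ p < -1) := by
  refine ⟨(αℓ_eq_neg_one_iff abs_pStarℓ_lt_one).2 rfl, fun p hp hpStar ↦ ?_, fun p hpStar hp ↦ ?_⟩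
  · have habs : |p| < 1 := abs_lt.2 ⟨by linarith, hpStar.trans pStarℓ_lt_one⟩
    exact ⟨(neg_one_lt_αℓ_iff habs).2 hpStar, (αℓ_lt_one_iff habs).2 hp⟩
  · have habs : |p| < 1 := abs_lt.2 ⟨by linarith [pStarℓ_pos], hp⟩
    exact (αℓ_lt_neg_one_iff habs).2 hpStar
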